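/- arXiv:1602.02719 — 2 statements merged into one kernel-verified Lean document; each statement's English description precedes it below -/
import Mathlib

section
/- Let k ≥ 2 and n ≥ 1. Every A ∈ L_n^k contains a monotone subsequence of length at least ⌊√(n / (3(k−1)))⌋. -/
open scoped Classical

/-- `A : [n]^{k+1} → {0,1}` is an order-`n` `k`-dimensional permutation if every
line (obtained by fixing all coordinates but one) contains exactly one `1`. -/
def IsHDPerm (n k : ℕ) (A : (Fin (k + 1) → Fin n) → Bool) : Prop :=
  ∀ (j : Fin (k + 1)) (x : Fin (k + 1) → Fin n),
    ∃! t : Fin n, A (Function.update x j t) = true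

/-- `L_n^k`: the finite set of order-`n` `k`-dimensional permutations. -/
noncomputable def HDPerms (n k : ℕ) : Finset ((Fin (k + 1) → Fin n) → Bool) :=
  Finset.univ.filter (fun A => IsHDPerm n k A)

/-- A monotone subsequence of length `m` in `A`: a sequence of `m` support
positions that is strictly monotone (in some direction) in every coordinate. -/
def IsMonoSub (n k m : ℕ) (A : (Fin (k + 1) → Fin n) → Bool)
    (α : Fin m → (Fin (k + 1) → Fin n)) : Prop :=
  (∀ i, A (α i) = true) ∧
    ∀ j : Fin (k + 1), StrictMono (fun i => α i j) ∨ StrictAnti (fun i => α i j)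

/-- `H(A)`: the maximum length of a monotone subsequence of `A`. -/
noncomputable def HLen (n k : ℕ) (A : (Fin (k + 1) → Fin n) → Bool) : ℕ :=
  sSup {m : ℕ | ∃ α : Fin m → (Fin (k + 1) → Fin n), IsMonoSub n k m A α}

/-- The strict partial order `<_c` on `[n]^{k+1}` induced by `c ∈ {0,1}^{k+1}`. -/
def cLT {n k : ℕ} (c : Fin (k + 1) → Bool) (x y : Fin (k + 1) → Fin n) : Prop :=
  ∀ i, if c i then x i < y i else y i < x i

/-- A `<_c`-monotone subsequence of length `m` in `A`: a `<_c`-chain of `m`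
support positions. -/
def IsCMonoSub (n k m : ℕ) (c : Fin (k + 1) → Bool)
    (A : (Fin (k + 1) → Fin n) → Bool) (α : Fin m → (Fin (k + 1) → Fin n)) : Prop :=
  (∀ i, A (α i) = true) ∧ ∀ i j : Fin m, i < j → cLT c (α i) (α j)

/-!
Solving for the last coordinate turns a `k`-dimensional permutation into a function
`f : [n]^k → [n]` that is injective along every axis-parallel line. Write `x ≺ y` if `x` is smaller
than `y` in every coordinate. If `f` is monotone on no `≺`-chain of length `m + 1`, then labelling
each point with the lengths of the longest `≺`-chains ending there on which `f` increases,
respectively decreases, partitions the cube into `m²` classes such that `f` is constant on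
`≺`-comparable points of a class. In one class,
* the `≺`-minimal points lie on distinct diagonals, of which there are at most `k * n ^ (k - 1)`;
* each axis-parallel line in a fixed direction has at most one non-minimal point: two of them would
  dominate a common point of the class, hence share their value of `f`.

Hence `n ^ k ≤ m² * (k + 1) * n ^ (k - 1)`.
-/

theorem exists_fin_rank_of_not_exists_chain {X : Type*} (r : X → X → Prop) [IsStrictOrder X r]
    {m : ℕ} (hr : ¬ ∃ c : Fin (m + 1) → X, ∀ i j, i < j → r (c i) (c j)) :
    ∃ ρ : X → Fin m, ∀ x y, r x y → ρ x < ρ y := by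
  let := partialOrderOfSO r
  have height_lt (x : X) : Order.height x < m := by
    by_contra! hx
    obtain ⟨p, -, rfl⟩ := Order.exists_series_of_le_height x hx
    exact hr ⟨p, fun _ _ hij => p.strictMono hij⟩
  choose ρ hρ using fun x : X => ENat.ne_top_iff_exists.1 (height_lt x).ne_top
  refine ⟨fun x => ⟨ρ x, by exact_mod_cast hρ x ▸ height_lt x⟩, fun x y hxy => ?_⟩
  have hlt : Order.height x < Order.height y := Order.height_strictMono hxy (height_lt x).lt_top
  rw [← hρ x, ← hρ y] at hlt
  exact_mod_cast hlt

theorem exists_fin_rank_of_not_exists_strongLT_chain {ι α β : Type*} [Preorder α] [Preorder β]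
    (f : (ι → α) → β) {m : ℕ}
    (hf : ¬ ∃ c : Fin (m + 1) → ι → α,
      (∀ j, StrictMono fun l => c l j) ∧ StrictMono fun l => f (c l)) :
    ∃ ρ : (ι → α) → Fin m, ∀ x y, StrongLT x y → f x < f y → ρ x < ρ y := by
  let r (x y : ι → α) : Prop := StrongLT x y ∧ f x < f y
  have : IsStrictOrder (ι → α) r :=
    { irrefl := fun x hx => lt_irrefl (f x) hx.2
      trans := fun x y z hxy hyz => ⟨fun j => (hxy.1 j).trans (hyz.1 j), hxy.2.trans hyz.2⟩ }
  obtain ⟨ρ, hρ⟩ := exists_fin_rank_of_not_exists_chain r (m := m) <| by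
    rintro ⟨c, hc⟩
    exact hf ⟨c, fun j l l' hl => (hc l l' hl).1 j, fun l l' hl => (hc l l' hl).2⟩
  exact ⟨ρ, fun x y hxy hfxy => hρ x y ⟨hxy, hfxy⟩⟩

theorem card_filter_apply_eq {ι α : Type*} [Fintype ι] [DecidableEq ι] [Fintype α] [DecidableEq α]
    (i : ι) (a : α) :
    (Finset.univ.filter fun x : ι → α => x i = a).card =
      Fintype.card α ^ (Fintype.card ι - 1) := by
  simpa using Fintype.card_filter_piFinset_const_eq_of_mem Finset.univ i (Finset.mem_univ a)

section Cube

variable {ι : Type*} [Fintype ι] {n : ℕ}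

section Diagonal

variable [Nonempty ι]

/-- The first point of the cube `ι → Fin n` on the diagonal through `x`, that is, on the line
through `x` in direction `(1, …, 1)`. The subtraction never wraps around. -/
def diagonalBase (x : ι → Fin n) : ι → Fin n :=
  fun i => x i - Finset.univ.inf' Finset.univ_nonempty x

theorem val_diagonalBase_add_inf' (x : ι → Fin n) (i : ι) :
    (diagonalBase x i : ℕ) + (Finset.univ.inf' Finset.univ_nonempty x : Fin n) = x i := by
  have hle : Finset.univ.inf' Finset.univ_nonempty x ≤ x i := Finset.inf'_le x (Finset.mem_univ i)
  rw [diagonalBase, Fin.sub_val_of_le hle, Nat.sub_add_cancel hle]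

theorem exists_diagonalBase_eq_zero [NeZero n] (x : ι → Fin n) : ∃ i, diagonalBase x i = 0 := by
  obtain ⟨i, -, hi⟩ := Finset.exists_mem_eq_inf' Finset.univ_nonempty x
  exact ⟨i, by rw [diagonalBase, hi, sub_self]⟩

theorem strongLT_trichotomy_of_diagonalBase_eq {x y : ι → Fin n}
    (h : diagonalBase x = diagonalBase y) : StrongLT x y ∨ x = y ∨ StrongLT y x := by
  have hx := val_diagonalBase_add_inf' x
  have hy := val_diagonalBase_add_inf' y
  rw [h] at hx
  rcases lt_trichotomy (Finset.univ.inf' Finset.univ_nonempty x)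
    (Finset.univ.inf' Finset.univ_nonempty y) with hlt | heq | hgt
  · exact .inl fun i => Fin.lt_def.2 (by have := Fin.lt_def.1 hlt; grind)
  · exact .inr <| .inl <| funext fun i => Fin.ext (by grind)
  · exact .inr <| .inr fun i => Fin.lt_def.2 (by have := Fin.lt_def.1 hgt; grind)

theorem card_le_of_forall_not_strongLT [NeZero n] {S : Finset (ι → Fin n)}
    (hS : ∀ x ∈ S, ∀ y ∈ S, ¬ StrongLT x y) :
    S.card ≤ Fintype.card ι * n ^ (Fintype.card ι - 1) := by
  have diagonalBase_injOn : Set.InjOn diagonalBase (S : Set (ι → Fin n)) := by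
    intro x hx y hy h
    rcases strongLT_trichotomy_of_diagonalBase_eq h with hlt | heq | hgt
    · exact absurd hlt (hS x hx y hy)
    · exact heq
    · exact absurd hgt (hS y hy x hx)
  calc
    S.card ≤ (Finset.univ.biUnion fun i : ι =>
        Finset.univ.filter fun z : ι → Fin n => z i = 0).card :=
      Finset.card_le_card_of_injOn diagonalBase
        (fun x _ => by simpa using exists_diagonalBase_eq_zero x) diagonalBase_injOn
    _ ≤ Fintype.card ι * n ^ (Fintype.card ι - 1) :=
      Finset.card_biUnion_le_card_mul _ _ _ fun i _ => by
        rw [card_filter_apply_eq, Fintype.card_fin]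

end Diagonal

variable [DecidableEq ι] {β : Type*} {f : (ι → Fin n) → β} {i : ι}

theorem card_filter_exists_strongLT_le [NeZero n]
    (hf : ∀ x, Function.Injective fun t => f (Function.update x i t)) {S : Finset (ι → Fin n)}
    (hS : ∀ x ∈ S, ∀ y ∈ S, StrongLT x y → f x = f y) :
    (S.filter fun y => ∃ x ∈ S, StrongLT x y).card ≤ n ^ (Fintype.card ι - 1) := by
  have eq_of_le {x y : ι → Fin n} (hx : x ∈ S ∧ ∃ z ∈ S, StrongLT z x) (hy : y ∈ S)
      (hxy : Function.update x i 0 = Function.update y i 0) (hle : x i ≤ y i) : x = y := by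
    have hy_eq : y = Function.update x i (y i) := by
      rw [← Function.update_idem (a := i) 0, hxy, Function.update_idem, Function.update_eq_self]
    obtain ⟨hxS, z, hz, hzx⟩ := hx
    have hzy : StrongLT z y := by
      rw [hy_eq]
      exact hzx.trans_le (le_update_self_iff.2 hle)
    have hfxy : f x = f y := (hS z hz x hxS hzx).symm.trans (hS z hz y hy hzy)
    have hi : x i = y i := hf x (by simpa only [Function.update_eq_self, ← hy_eq] using hfxy)
    rw [hy_eq, ← hi, Function.update_eq_self]
  have update_injOn : Set.InjOn (fun x : ι → Fin n => Function.update x i 0)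
      (S.filter fun y => ∃ x ∈ S, StrongLT x y) := by
    intro x hx y hy hxy
    have hx := Finset.mem_filter.1 hx
    have hy := Finset.mem_filter.1 hy
    rcases le_total (x i) (y i) with hle | hle
    · exact eq_of_le hx hy.1 hxy hle
    · exact (eq_of_le hy hx.1 hxy.symm hle).symm
  calc
    _ ≤ (Finset.univ.filter fun z : ι → Fin n => z i = 0).card :=
      Finset.card_le_card_of_injOn _ (fun x _ => by simp) update_injOn
    _ = n ^ (Fintype.card ι - 1) := by rw [card_filter_apply_eq, Fintype.card_fin]

theorem card_le_of_forall_strongLT_imp_eq [NeZero n]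
    (hf : ∀ x, Function.Injective fun t => f (Function.update x i t)) {S : Finset (ι → Fin n)}
    (hS : ∀ x ∈ S, ∀ y ∈ S, StrongLT x y → f x = f y) :
    S.card ≤ (Fintype.card ι + 1) * n ^ (Fintype.card ι - 1) := by
  have : Nonempty ι := ⟨i⟩
  have card_minimal_le : (S.filter fun y => ¬ ∃ x ∈ S, StrongLT x y).card ≤
      Fintype.card ι * n ^ (Fintype.card ι - 1) := by
    refine card_le_of_forall_not_strongLT fun x hx y hy hxy => ?_
    exact (Finset.mem_filter.1 hy).2 ⟨x, (Finset.mem_filter.1 hx).1, hxy⟩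
  have card_nonminimal_le := card_filter_exists_strongLT_le hf hS
  rw [← Finset.card_filter_add_card_filter_not (s := S) fun y => ∃ x ∈ S, StrongLT x y]
  linarith

theorem exists_strictMono_or_strictAnti_of_sq_mul_lt [LinearOrder β]
    (hf : ∀ x, Function.Injective fun t => f (Function.update x i t)) {m : ℕ}
    (hm : m ^ 2 * (Fintype.card ι + 1) < n) :
    ∃ c : Fin (m + 1) → ι → Fin n, (∀ j, StrictMono fun l => c l j) ∧
      ((StrictMono fun l => f (c l)) ∨ StrictAnti fun l => f (c l)) := by
  by_contra! hc
  obtain ⟨ρ, hρ⟩ := exists_fin_rank_of_not_exists_strongLT_chain f (m := m)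
    fun ⟨c, hmono, hfc⟩ => (hc c hmono).1 hfc
  obtain ⟨σ, hσ⟩ := exists_fin_rank_of_not_exists_strongLT_chain (OrderDual.toDual ∘ f) (m := m)
    fun ⟨c, hmono, hfc⟩ => (hc c hmono).2 hfc
  have : NeZero n := ⟨by lia⟩
  have card_class_le (p : Fin m × Fin m) :
      (Finset.univ.filter fun x => (ρ x, σ x) = p).card ≤
        (Fintype.card ι + 1) * n ^ (Fintype.card ι - 1) := by
    refine card_le_of_forall_strongLT_imp_eq hf fun x hx y hy hxy => ?_
    have hp : (ρ x, σ x) = (ρ y, σ y) :=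
      (Finset.mem_filter.1 hx).2.trans (Finset.mem_filter.1 hy).2.symm
    obtain ⟨hρxy, hσxy⟩ := Prod.mk.inj hp
    rcases lt_trichotomy (f x) (f y) with hlt | heq | hgt
    · exact absurd hρxy (hρ x y hxy hlt).ne
    · exact heq
    · exact absurd hσxy (hσ x y hxy hgt).ne
  have card_cube_le : n ^ Fintype.card ι ≤
      (Fintype.card ι + 1) * n ^ (Fintype.card ι - 1) * (m * m) := by
    simpa using Finset.card_le_mul_card_image_of_maps_to (s := Finset.univ)
      (t := Finset.univ) (f := fun x => (ρ x, σ x)) (by simp) _ fun p _ => card_class_le p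
  have hcard : Fintype.card ι ≠ 0 := (Fintype.card_pos_iff.2 ⟨i⟩).ne'
  rw [← mul_pow_sub_one hcard n] at card_cube_le
  have hpow : 0 < n ^ (Fintype.card ι - 1) := Nat.pow_pos (NeZero.pos n)
  have : n ≤ m ^ 2 * (Fintype.card ι + 1) := by
    refine Nat.le_of_mul_le_mul_right ?_ hpow
    linarith
  exact hm.not_ge this

end Cube

namespace IsHDPerm

variable {n k : ℕ} {A : (Fin (k + 1) → Fin n) → Bool}

theorem exists_apply_snoc [NeZero n] (hA : IsHDPerm n k A) :
    ∃ f : (Fin k → Fin n) → Fin n, ∀ x, A (Fin.snoc (α := fun _ => Fin n) x (f x)) = true := by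
  choose f hf using fun x : Fin k → Fin n =>
    (hA (Fin.last k) (Fin.snoc (α := fun _ => Fin n) x 0)).exists
  exact ⟨f, fun x => by simpa only [Fin.update_snoc_last] using hf x⟩

theorem injective_update_of_apply_snoc (hA : IsHDPerm n k A) {f : (Fin k → Fin n) → Fin n}
    (hf : ∀ x, A (Fin.snoc (α := fun _ => Fin n) x (f x)) = true) (i : Fin k) (x : Fin k → Fin n) :
    Function.Injective fun t => f (Function.update x i t) := by
  intro s t hst
  refine (hA i.castSucc (Fin.snoc (α := fun _ => Fin n) x (f (Function.update x i s)))).unique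
    ?_ ?_
  · rw [← Fin.snoc_update]
    exact hf _
  · rw [← Fin.snoc_update, show f (Function.update x i s) = f (Function.update x i t) from hst]
    exact hf _

theorem exists_isMonoSub_succ (hA : IsHDPerm n k A) (hk : 1 ≤ k) {m : ℕ}
    (hm : m ^ 2 * (k + 1) < n) :
    ∃ α : Fin (m + 1) → Fin (k + 1) → Fin n, IsMonoSub n k (m + 1) A α := by
  have : NeZero n := ⟨by lia⟩
  obtain ⟨f, hf⟩ := hA.exists_apply_snoc
  obtain ⟨c, hc, hfc⟩ := exists_strictMono_or_strictAnti_of_sq_mul_lt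
    (hA.injective_update_of_apply_snoc hf ⟨0, hk⟩) (m := m) (by rwa [Fintype.card_fin])
  refine ⟨fun l => Fin.snoc (α := fun _ => Fin n) (c l) (f (c l)), fun l => hf (c l), fun j => ?_⟩
  induction j using Fin.lastCases with
  | last => simpa only [Fin.snoc_last] using hfc
  | cast j => simpa only [Fin.snoc_castSucc] using Or.inl (hc j)

end IsHDPerm

theorem hd_erdos_szekeres_lower_general (n k m : ℕ) (hk : 1 ≤ k) (hm : m ^ 2 * (k + 1) ≤ n)
    (A : (Fin (k + 1) → Fin n) → Bool) (hA : IsHDPerm n k A) :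
    ∃ α : Fin m → (Fin (k + 1) → Fin n), IsMonoSub n k m A α := by
  rcases m with _ | m
  · exact ⟨Fin.elim0, Fin.rec0, fun j => .inl fun l => l.elim0⟩
  · exact hA.exists_isMonoSub_succ hk (lt_of_lt_of_le (by gcongr; lia) hm)

theorem sqrt_div_sq_mul_le (n d : ℕ) : Nat.sqrt (n / d) ^ 2 * d ≤ n :=
  (Nat.mul_le_mul_right d (Nat.sqrt_le' _)).trans (Nat.div_mul_le_self n d)

/-- Every `A ∈ L_n^k` (with `k ≥ 2`) contains a monotone subsequence of length
at least `⌊√(n / (3(k-1)))⌋`. -/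
theorem hd_erdos_szekeres_lower (n k : ℕ) (hk : 2 ≤ k) (hn : 1 ≤ n)
    (A : (Fin (k + 1) → Fin n) → Bool) (hA : IsHDPerm n k A) :
    ∃ α : Fin (Nat.sqrt (n / (3 * (k - 1)))) → (Fin (k + 1) → Fin n),
      IsMonoSub n k (Nat.sqrt (n / (3 * (k - 1)))) A α := by
  have hbound : Nat.sqrt (n / (3 * (k - 1))) ^ 2 * (k + 1) ≤ n :=
    (Nat.mul_le_mul_left _ (by lia)).trans (sqrt_div_sq_mul_le n (3 * (k - 1)))
  exact hd_erdos_szekeres_lower_general n k _ (by lia) hbound A hA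
end

section
/- Fix k ≥ 1 and ε > 0. As n → ∞, the fraction of A ∈ L_n^k satisfying (1/(k+2)) · n^{k/(k+1)} ≤ H(A) ≤ (e + ε) · n^{k/(k+1)} tends to 1. In other words, asymptotically almost surely a uniformly random A ∈ L_n^k satisfies H(A)·n^{-k/(k+1)} ∈ [1/(k+2), e + ε]. -/
open scoped Classical

/-!
Permuting `[n]` in each coordinate preserves `L_n^k`. Given that the support contains `S`, the
positions on a line whose free coordinate does not occur in `S` are therefore equally likely to be
the one in the support, so a position extends `S` with conditional probability at most
`1 / (n - #S)` as soon as one of its coordinates is new.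

Upper bound: a monotone sequence of `m` positions lies in the support with probability at most
`1 / (n)_m`, so the expected number of monotone subsequences of length `m` is at most
`(2 * n.choose m) ^ (k + 1) / (n)_m`, which is exponentially small once `m > (e + ε) n^{k/(k+1)}`.

Lower bound: cut the main diagonal of `[n]^{k+1}` into about `n^{k/(k+1)}` cubes of side about
`n^{1/(k+1)}`, and let `X_i` be the number of support positions in the `i`-th cube. One position
from each occupied cube forms a monotone subsequence, so `H(A) ≥ ∑ (X_i - X_i.choose 2)`. The
`X_i` have asymptotic mean `1` and second moment `2`, as for Poisson variables, and different cubes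
are asymptotically uncorrelated; by Chebyshev's inequality `H(A)` is at least `1/2 - o(1)` times
the number of cubes, and `1 / (k + 2) < 1 / 2`.
-/

open Filter Finset
open scoped BigOperators Topology

section Aas

variable {α : ℕ → Type*} {Ω : ∀ n, Finset (α n)} {P Q : ∀ n, α n → Prop}

/-- `P` holds asymptotically almost surely in `Ω`: for a uniformly random `a ∈ Ω n`, the
probability of `P n a` tends to `1`. An empty `Ω n` contributes probability `0`. -/
def Aas (Ω : ∀ n, Finset (α n)) (P : ∀ n, α n → Prop) : Prop :=
  Tendsto (fun n => (#{a ∈ Ω n | P n a} : ℝ) / #(Ω n)) atTop (𝓝 1)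

lemma aas_of_le_ratio {u : ℕ → ℝ} (hu : Tendsto u atTop (𝓝 1))
    (h : ∀ᶠ n in atTop, u n ≤ (#{a ∈ Ω n | P n a} : ℝ) / #(Ω n)) : Aas Ω P := by
  refine tendsto_of_tendsto_of_tendsto_of_le_of_le' hu tendsto_const_nhds h (.of_forall fun n => ?_)
  exact div_le_one_of_le₀ (mod_cast card_filter_le _ _) (Nat.cast_nonneg _)

lemma Aas.mono (hP : Aas Ω P) (h : ∀ᶠ n in atTop, ∀ a ∈ Ω n, P n a → Q n a) : Aas Ω Q := by
  refine aas_of_le_ratio hP (h.mono fun n hPQ => ?_)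
  gcongr ?_ / _
  exact mod_cast card_le_card fun a ha =>
    mem_filter.2 ⟨(mem_filter.1 ha).1, hPQ a (mem_filter.1 ha).1 (mem_filter.1 ha).2⟩

lemma Aas.and (hP : Aas Ω P) (hQ : Aas Ω Q) : Aas Ω fun n a => P n a ∧ Q n a := by
  have hlim := (hP.add hQ).sub_const 1
  rw [add_sub_cancel_right] at hlim
  refine aas_of_le_ratio hlim (.of_forall fun n => ?_)
  have hinter : #{a ∈ Ω n | P n a} + #{a ∈ Ω n | Q n a} ≤ #{a ∈ Ω n | P n a ∧ Q n a} + #(Ω n) := by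
    rw [← card_union_add_card_inter, filter_and, add_comm]
    gcongr
    exact union_subset (filter_subset _ _) (filter_subset _ _)
  rcases (Ω n).eq_empty_or_nonempty with hΩ | hΩ
  · simp [hΩ]
  · have hcard : (0 : ℝ) < #(Ω n) := mod_cast hΩ.card_pos
    rw [← add_div, div_sub_one hcard.ne']
    gcongr
    rw [sub_le_iff_le_add]
    norm_cast
    convert hinter

lemma aas_of_expect_le (hΩ : ∀ᶠ n in atTop, (Ω n).Nonempty) {F : ∀ n, α n → ℝ} {u : ℕ → ℝ}
    (hF₀ : ∀ n, ∀ a ∈ Ω n, 0 ≤ F n a) (hF : ∀ᶠ n in atTop, 𝔼 a ∈ Ω n, F n a ≤ u n)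
    (hu : Tendsto u atTop (𝓝 0)) (hP : ∀ n, ∀ a ∈ Ω n, ¬P n a → 1 ≤ F n a) : Aas Ω P := by
  have hlim : Tendsto (fun n => 1 - u n) atTop (𝓝 1) := by simpa using hu.const_sub 1
  refine aas_of_le_ratio hlim ?_
  filter_upwards [hΩ, hF] with n hne hmean
  have hcard : (0 : ℝ) < #(Ω n) := mod_cast hne.card_pos
  have hmarkov : (#{a ∈ Ω n | ¬P n a} : ℝ) ≤ u n * #(Ω n) := by
    calc (#{a ∈ Ω n | ¬P n a} : ℝ) = ∑ a ∈ Ω n with ¬P n a, 1 := by simp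
      _ ≤ ∑ a ∈ Ω n with ¬P n a, F n a := sum_le_sum fun a ha =>
          hP n a (mem_filter.1 ha).1 (mem_filter.1 ha).2
      _ ≤ ∑ a ∈ Ω n, F n a :=
          sum_le_sum_of_subset_of_nonneg (filter_subset _ _) fun a ha _ => hF₀ n a ha
      _ ≤ u n * #(Ω n) := by rwa [expect_eq_sum_div_card, div_le_iff₀ hcard] at hmean
  have hsplit : (#{a ∈ Ω n | P n a} + #{a ∈ Ω n | ¬P n a} : ℝ) = #(Ω n) :=
    mod_cast card_filter_add_card_filter_not _
  rw [le_div_iff₀ hcard]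
  linarith

lemma expect_sq_sum_le {ι β : Type*} {s : Finset β} {I : Finset ι} {Z : ι → β → ℝ} {B C : ℝ}
    (hB₀ : 0 ≤ B) (hB : ∀ i ∈ I, ∀ j ∈ I, i ≠ j → 𝔼 a ∈ s, Z i a * Z j a ≤ B)
    (hC : ∀ i ∈ I, 𝔼 a ∈ s, Z i a ^ 2 ≤ C) :
    𝔼 a ∈ s, (∑ i ∈ I, Z i a) ^ 2 ≤ #I ^ 2 * B + #I * C := by
  calc 𝔼 a ∈ s, (∑ i ∈ I, Z i a) ^ 2 = ∑ i ∈ I, ∑ j ∈ I, 𝔼 a ∈ s, Z i a * Z j a := by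
        simp only [sq, sum_mul_sum, expect_sum_comm]
    _ ≤ ∑ i ∈ I, ∑ j ∈ I, (B + if i = j then C else 0) := by
        refine sum_le_sum fun i hi => sum_le_sum fun j hj => ?_
        split_ifs with hij
        · subst hij
          simpa only [← sq] using (hC i hi).trans (le_add_of_nonneg_left hB₀)
        · simpa only [add_zero] using hB i hi j hj hij
    _ = #I ^ 2 * B + #I * C := by
        simp only [sum_add_distrib, sum_const, sum_ite_eq, nsmul_eq_mul]
        rw [sum_congr rfl fun i hi => if_pos hi, sum_const, nsmul_eq_mul]
        ring

lemma expect_sq_avg_sub_le {ι β : Type*} {s : Finset β} (hs : s.Nonempty) {I : Finset ι}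
    (hI : I.Nonempty) {Z : ι → β → ℝ} {a l B C : ℝ} (ha : 0 ≤ a) (hB₀ : 0 ≤ B)
    (hl : ∀ i ∈ I, l ≤ 𝔼 b ∈ s, Z i b)
    (hB : ∀ i ∈ I, ∀ j ∈ I, i ≠ j → 𝔼 b ∈ s, Z i b * Z j b ≤ B)
    (hC : ∀ i ∈ I, 𝔼 b ∈ s, Z i b ^ 2 ≤ C) :
    𝔼 b ∈ s, ((∑ i ∈ I, Z i b) / #I - a) ^ 2 ≤ B + C / #I - 2 * a * l + a ^ 2 := by
  have hcard : (0 : ℝ) < #I := mod_cast hI.card_pos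
  have hexpand (b : β) : ((∑ i ∈ I, Z i b) / #I - a) ^ 2
      = (∑ i ∈ I, Z i b) ^ 2 / #I ^ 2 - 2 * a / #I * ∑ i ∈ I, Z i b + a ^ 2 := by ring
  have hsecond : (𝔼 b ∈ s, (∑ i ∈ I, Z i b) ^ 2) / #I ^ 2 ≤ B + C / #I := by
    rw [div_le_iff₀ (pow_pos hcard 2)]
    refine (expect_sq_sum_le hB₀ hB hC).trans_eq ?_
    field_simp
  have hfirst : 2 * a * l ≤ 2 * a / #I * 𝔼 b ∈ s, ∑ i ∈ I, Z i b := by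
    have hsum : #I * l ≤ 𝔼 b ∈ s, ∑ i ∈ I, Z i b := by
      rw [expect_sum_comm, ← nsmul_eq_mul]
      exact card_nsmul_le_sum _ _ _ hl
    calc 2 * a * l = 2 * a / #I * (#I * l) := by field_simp
      _ ≤ _ := by gcongr
  simp only [hexpand, expect_add_distrib, expect_sub_distrib, expect_const hs, ← expect_div,
    ← mul_expect]
  linarith

lemma aas_abs_avg_sub_lt (hΩ : ∀ᶠ n in atTop, (Ω n).Nonempty) {M : ℕ → ℕ}
    (hM : Tendsto M atTop atTop) {Z : ∀ n, ℕ → α n → ℝ} {l B : ℕ → ℝ} {a C δ : ℝ} (ha : 0 ≤ a)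
    (hl : Tendsto l atTop (𝓝 a)) (hB : Tendsto B atTop (𝓝 (a ^ 2)))
    (hmean : ∀ᶠ n in atTop, ∀ i < M n, l n ≤ 𝔼 b ∈ Ω n, Z n i b)
    (hcross : ∀ᶠ n in atTop, ∀ i < M n, ∀ j < M n, i ≠ j → 𝔼 b ∈ Ω n, Z n i b * Z n j b ≤ B n)
    (hsq : ∀ᶠ n in atTop, ∀ i < M n, 𝔼 b ∈ Ω n, Z n i b ^ 2 ≤ C) (hδ : 0 < δ) :
    Aas Ω fun n b => |(∑ i ∈ range (M n), Z n i b) / M n - a| < δ := by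
  have hvar : Tendsto (fun n => (max (B n) 0 + C / M n - 2 * a * l n + a ^ 2) / δ ^ 2)
      atTop (𝓝 0) := by
    have hM' : Tendsto (fun n => C / (M n : ℝ)) atTop (𝓝 0) :=
      (tendsto_natCast_atTop_atTop.comp hM).const_div_atTop C
    have hB' := hB.max (tendsto_const_nhds (x := (0 : ℝ)))
    rw [max_eq_left (sq_nonneg a)] at hB'
    convert (((hB'.add hM').sub (hl.const_mul (2 * a))).add_const (a ^ 2)).div_const (δ ^ 2) using 2
    ring
  refine aas_of_expect_le hΩ (F := fun n b => ((∑ i ∈ range (M n), Z n i b) / M n - a) ^ 2 / δ ^ 2)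
    (fun n b _ => by positivity) ?_ hvar fun n b _ hb => ?_
  · filter_upwards [hΩ, hM.eventually_gt_atTop 0, hmean, hcross, hsq] with n hne hMpos hm hc hs
    simp only [← mem_range (n := M n)] at hm hc hs
    have hbound := expect_sq_avg_sub_le hne (nonempty_range_iff.2 hMpos.ne') ha
      (le_max_right (B n) 0) hm
      (fun i hi j hj hij => (hc i hi j hj hij).trans (le_max_left _ _)) hs
    rw [card_range] at hbound
    rw [← expect_div]
    gcongr
  · rw [one_le_div (by positivity), ← sq_abs (_ - a)]
    gcongr
    exact not_lt.1 hb

end Aas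

section HDPerms

variable {n k : ℕ} {A : (Fin (k + 1) → Fin n) → Bool} {S : Finset (Fin (k + 1) → Fin n)}
  {z : Fin (k + 1) → Fin n} {a : Fin (k + 1)}

lemma mem_HDPerms : A ∈ HDPerms n k ↔ IsHDPerm n k A := by
  simp only [HDPerms, mem_filter, mem_univ, true_and]

lemma HDPerms_nonempty (hn : n ≠ 0) : (HDPerms n k).Nonempty := by
  have : NeZero n := ⟨hn⟩
  refine ⟨fun x => decide (∑ i, x i = 0), mem_HDPerms.2 fun j x => ?_⟩
  simp only [decide_eq_true_eq, sum_update_of_mem (mem_univ j)]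
  exact ⟨-∑ i ∈ univ \ {j}, x i, neg_add_cancel _, fun t ht => eq_neg_of_add_eq_zero_left ht⟩

lemma IsHDPerm.comp_perm (hA : IsHDPerm n k A) (π : Fin (k + 1) → Equiv.Perm (Fin n)) :
    IsHDPerm n k fun x => A fun i => π i (x i) := by
  intro j x
  have hupdate (t : Fin n) : (fun i => π i (Function.update x j t i))
      = Function.update (fun i => π i (x i)) j (π j t) := by
    ext i
    rcases eq_or_ne i j with rfl | hij
    · simp
    · simp [hij]
  simp only [hupdate]
  exact (π j).bijective.existsUnique_iff.1 (hA j _)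

/-- The indicator of the event that the support of `A` contains `S`. -/
noncomputable def onesInd (S : Finset (Fin (k + 1) → Fin n)) (A : (Fin (k + 1) → Fin n) → Bool) :
    ℝ :=
  if ∀ x ∈ S, A x = true then 1 else 0

/-- The probability that the support of a uniformly random `A ∈ L_n^k` contains `S`. -/
noncomputable def onesProb (S : Finset (Fin (k + 1) → Fin n)) : ℝ :=
  𝔼 A ∈ HDPerms n k, onesInd S A

lemma onesInd_nonneg : 0 ≤ onesInd S A := by
  unfold onesInd
  split_ifs <;> norm_num

lemma onesInd_empty : onesInd ∅ A = 1 := by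
  simp [onesInd]

lemma onesInd_insert : onesInd (insert z S) A = onesInd {z} A * onesInd S A := by
  simp [onesInd, ← ite_and, and_comm]

lemma onesProb_nonneg : 0 ≤ onesProb S :=
  expect_nonneg fun _ _ => onesInd_nonneg

lemma onesProb_empty (hn : n ≠ 0) : onesProb (∅ : Finset (Fin (k + 1) → Fin n)) = 1 := by
  simp only [onesProb, onesInd_empty, expect_const (HDPerms_nonempty hn)]

lemma onesProb_image_perm (π : Fin (k + 1) → Equiv.Perm (Fin n)) :
    onesProb (S.image fun x i => π i (x i)) = onesProb S := by
  refine expect_nbij' (fun A x => A fun i => π i (x i)) (fun A x => A fun i => (π i).symm (x i))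
    (fun A hA => ?_) (fun A hA => ?_) (fun A _ => ?_) (fun A _ => ?_) (fun A _ => ?_)
  · exact mem_HDPerms.2 ((mem_HDPerms.1 hA).comp_perm π)
  · exact mem_HDPerms.2 ((mem_HDPerms.1 hA).comp_perm fun i => (π i).symm)
  · simp
  · simp
  · simp [onesInd]

lemma onesProb_insert_update {t : Fin n} (hz : z a ∉ S.image (· a)) (ht : t ∉ S.image (· a)) :
    onesProb (insert (Function.update z a t) S) = onesProb (insert z S) := by
  rw [← onesProb_image_perm (S := insert z S) (Function.update 1 a (Equiv.swap (z a) t)),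
    image_insert]
  congr 2
  · ext i
    rcases eq_or_ne i a with rfl | hi
    · simp
    · simp [hi]
  · refine (image_congr fun x hx => ?_).trans image_id |>.symm
    have hxz : x a ≠ z a := fun h => hz (mem_image.2 ⟨x, hx, h⟩)
    have hxt : x a ≠ t := fun h => ht (mem_image.2 ⟨x, hx, h⟩)
    ext i
    rcases eq_or_ne i a with rfl | hi
    · simp [Equiv.swap_apply_of_ne_of_ne hxz hxt]
    · simp [hi]

lemma sum_onesProb_insert_update (S : Finset (Fin (k + 1) → Fin n)) (z : Fin (k + 1) → Fin n)
    (a : Fin (k + 1)) : ∑ t, onesProb (insert (Function.update z a t) S) = onesProb S := by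
  simp only [onesProb]
  rw [← expect_sum_comm]
  refine expect_congr rfl fun A hA => ?_
  obtain ⟨t₀, ht₀, huniq⟩ := mem_HDPerms.1 hA a z
  have hline : ∑ t, onesInd {Function.update z a t} A = 1 := by
    rw [Fintype.sum_eq_single t₀ fun t ht => ?_]
    · simp [onesInd, ht₀]
    · simpa [onesInd] using fun h => ht (huniq t h)
  simp only [onesInd_insert, ← sum_mul, hline, one_mul]

/-- Along the line through `z` in direction `a`, all positions whose `a`-th coordinate does not
occur in `S` are equally likely to be the one in the support. -/
lemma onesProb_insert_eq (hz : z a ∉ S.image (· a)) :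
    (n - #(S.image (· a))) * onesProb (insert z S)
      + ∑ t ∈ S.image (· a), onesProb (insert (Function.update z a t) S) = onesProb S := by
  rw [← sum_onesProb_insert_update S z a, ← sum_compl_add_sum (S.image (· a)),
    sum_congr rfl fun t ht => onesProb_insert_update hz (mem_compl.1 ht), sum_const, card_compl,
    Fintype.card_fin, nsmul_eq_mul, Nat.cast_sub (by simpa using card_le_univ (S.image (· a)))]

lemma onesProb_insert_mul_le (hz : z a ∉ S.image (· a)) :
    (n - #S) * onesProb (insert z S) ≤ onesProb S := by
  have hcard : (#(S.image (· a)) : ℝ) ≤ #S := mod_cast card_image_le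
  have hrest : 0 ≤ ∑ t ∈ S.image (· a), onesProb (insert (Function.update z a t) S) :=
    sum_nonneg fun _ _ => onesProb_nonneg
  nlinarith [onesProb_insert_eq hz, onesProb_nonneg (S := insert z S)]

lemma onesProb_mul_descFactorial_le (hn : n ≠ 0)
    (hS : Set.InjOn (· a) (S : Set (Fin (k + 1) → Fin n))) :
    onesProb S * n.descFactorial #S ≤ 1 := by
  induction S using Finset.induction_on with
  | empty => simp [onesProb_empty hn]
  | insert z S hzS ih =>
    have hSinj : Set.InjOn (· a) (S : Set (Fin (k + 1) → Fin n)) := hS.mono (by simp)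
    have hz : z a ∉ S.image (· a) := by
      rintro h
      obtain ⟨x, hx, hxz⟩ := mem_image.1 h
      exact hzS (hS (by simp [hx]) (by simp) hxz ▸ hx)
    have hcard : #S ≤ n := by
      simpa [card_image_of_injOn hSinj] using card_le_univ (S.image (· a))
    rw [card_insert_of_notMem hzS, Nat.descFactorial_succ, Nat.cast_mul, Nat.cast_sub hcard]
    calc onesProb (insert z S) * ((n - #S) * n.descFactorial #S)
        = (n - #S) * onesProb (insert z S) * n.descFactorial #S := by ring
      _ ≤ onesProb S * n.descFactorial #S := by gcongr; exact onesProb_insert_mul_le hz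
      _ ≤ 1 := ih hSinj

end HDPerms

section MonotoneSubsequences

variable {n k : ℕ} {A : (Fin (k + 1) → Fin n) → Bool}

lemma bddAbove_isMonoSub_length (A : (Fin (k + 1) → Fin n) → Bool) :
    BddAbove {m : ℕ | ∃ α : Fin m → (Fin (k + 1) → Fin n), IsMonoSub n k m A α} := by
  refine ⟨n, ?_⟩
  rintro m ⟨α, -, hα⟩
  have hinj : Function.Injective fun i => α i 0 :=
    (hα 0).elim StrictMono.injective StrictAnti.injective
  simpa using Fintype.card_le_of_injective _ hinj

lemma IsMonoSub.le_HLen {m : ℕ} {α : Fin m → (Fin (k + 1) → Fin n)} (hα : IsMonoSub n k m A α) :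
    m ≤ HLen n k A :=
  le_csSup (bddAbove_isMonoSub_length A) ⟨α, hα⟩

lemma exists_isMonoSub_of_le_HLen {m : ℕ} (hm : m ≤ HLen n k A) :
    ∃ α : Fin m → (Fin (k + 1) → Fin n), IsMonoSub n k m A α := by
  have hne : {m : ℕ | ∃ α : Fin m → (Fin (k + 1) → Fin n), IsMonoSub n k m A α}.Nonempty :=
    ⟨0, finZeroElim, finZeroElim, fun _ => .inl (Subsingleton.strictMono _)⟩
  obtain ⟨α, hαA, hα⟩ := Nat.sSup_mem hne (bddAbove_isMonoSub_length A)
  exact ⟨α ∘ Fin.castLE hm, fun i => hαA _, fun j => (hα j).imp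
    (·.comp (Fin.strictMono_castLE hm)) (·.comp_strictMono (Fin.strictMono_castLE hm))⟩

/-- The strictly monotone (in either direction) sequences of length `m` in `[n]`. -/
noncomputable def monoSeqs (m n : ℕ) : Finset (Fin m → Fin n) :=
  {f | StrictMono f ∨ StrictAnti f}

lemma injective_of_mem_monoSeqs {m : ℕ} {f : Fin m → Fin n} (hf : f ∈ monoSeqs m n) :
    Function.Injective f :=
  (mem_filter.1 hf).2.elim StrictMono.injective StrictAnti.injective

lemma card_le_choose_of_injOn_range {ι β : Type*} [Fintype ι] [Fintype β] {s : Finset (ι → β)}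
    (hs : ∀ f ∈ s, Function.Injective f) (hrange : Set.InjOn Set.range (s : Set (ι → β))) :
    #s ≤ (Fintype.card β).choose (Fintype.card ι) := by
  rw [← card_univ (α := β), ← card_powersetCard]
  refine card_le_card_of_injOn (fun f => univ.image f) (fun f hf => ?_) fun f hf g hg hfg => ?_
  · simp [card_image_of_injective _ (hs f hf)]
  · exact hrange hf hg (by simpa using congrArg (fun t : Finset β => (t : Set β)) hfg)

lemma card_monoSeqs_le (m n : ℕ) : #(monoSeqs m n) ≤ 2 * n.choose m := by
  rw [monoSeqs, filter_or, two_mul]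
  refine (card_union_le _ _).trans (add_le_add ?_ ?_)
  · simpa using card_le_choose_of_injOn_range (s := {f : Fin m → Fin n | StrictMono f})
      (fun f hf => (mem_filter.1 hf).2.injective) fun f hf g hg =>
        ((mem_filter.1 hf).2.range_inj (mem_filter.1 hg).2).1
  · simpa using card_le_choose_of_injOn_range (s := {f : Fin m → Fin n | StrictAnti f})
      (fun f hf => (mem_filter.1 hf).2.injective) fun f hf g hg =>
        ((mem_filter.1 hf).2.range_inj (mem_filter.1 hg).2).1

/-- The set of positions listed by a sequence given coordinate by coordinate. -/
def positions {m : ℕ} (β : Fin (k + 1) → Fin m → Fin n) : Finset (Fin (k + 1) → Fin n) :=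
  univ.image fun i j => β j i

lemma onesProb_positions_le (hn : n ≠ 0) {m : ℕ} {β : Fin (k + 1) → Fin m → Fin n}
    (hβ : Function.Injective (β 0)) :
    onesProb (positions β) ≤ (m.factorial * n.choose m : ℝ)⁻¹ := by
  have hm : m ≤ n := by simpa using Fintype.card_le_of_injective _ hβ
  have hcard : #(positions β) = m := by
    rw [positions, card_image_of_injective, card_fin]
    exact fun i i' h => hβ (congrFun h 0)
  have hinjOn : Set.InjOn (· 0) (positions β : Set (Fin (k + 1) → Fin n)) := by
    simp only [positions, coe_image, coe_univ, Set.image_univ]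
    rintro _ ⟨i, rfl⟩ _ ⟨i', rfl⟩ h
    rw [hβ h]
  have hprob := onesProb_mul_descFactorial_le hn hinjOn
  rw [hcard, Nat.descFactorial_eq_factorial_mul_choose, Nat.cast_mul] at hprob
  have hpos : (0 : ℝ) < m.factorial * n.choose m :=
    mod_cast Nat.mul_pos m.factorial_pos (Nat.choose_pos hm)
  rwa [← one_div, le_div_iff₀ hpos]

/-- The number of monotone subsequences of `A` of length `m`. -/
noncomputable def monoSubCount (m : ℕ) (A : (Fin (k + 1) → Fin n) → Bool) : ℝ :=
  ∑ β ∈ Fintype.piFinset fun _ : Fin (k + 1) => monoSeqs m n, onesInd (positions β) A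

lemma one_le_monoSubCount {m : ℕ} (hm : m ≤ HLen n k A) : 1 ≤ monoSubCount m A := by
  obtain ⟨α, hαA, hα⟩ := exists_isMonoSub_of_le_HLen hm
  have hmem : (fun j i => α i j) ∈ Fintype.piFinset fun _ : Fin (k + 1) => monoSeqs m n :=
    Fintype.mem_piFinset.2 fun j => mem_filter.2 ⟨mem_univ _, hα j⟩
  refine le_trans ?_ (single_le_sum (fun β _ => onesInd_nonneg) hmem)
  simp [onesInd, positions, hαA]

lemma expect_monoSubCount_le (hn : n ≠ 0) (m : ℕ) :
    𝔼 A ∈ HDPerms n k, monoSubCount m A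
      ≤ 2 ^ (k + 1) * (((n : ℝ) ^ k) ^ m / (m.factorial : ℝ) ^ (k + 1)) := by
  have hcard : (#(Fintype.piFinset fun _ : Fin (k + 1) => monoSeqs m n) : ℝ)
      ≤ (2 * n.choose m) ^ (k + 1) := by
    rw [Fintype.card_piFinset_const]
    exact mod_cast Nat.pow_le_pow_left (card_monoSeqs_le m n) (k + 1)
  calc 𝔼 A ∈ HDPerms n k, monoSubCount m A
      = ∑ β ∈ Fintype.piFinset fun _ : Fin (k + 1) => monoSeqs m n, onesProb (positions β) := by
        simp only [monoSubCount, onesProb, expect_sum_comm]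
    _ ≤ #(Fintype.piFinset fun _ : Fin (k + 1) => monoSeqs m n)
          * (m.factorial * n.choose m : ℝ)⁻¹ := by
        rw [← nsmul_eq_mul]
        exact sum_le_card_nsmul _ _ _ fun β hβ =>
          onesProb_positions_le hn (injective_of_mem_monoSeqs (Fintype.mem_piFinset.1 hβ 0))
    _ ≤ (2 * n.choose m) ^ (k + 1) * (m.factorial * n.choose m : ℝ)⁻¹ := by gcongr
    _ = 2 ^ (k + 1) * ((n.choose m : ℝ) ^ k * (m.factorial : ℝ)⁻¹)
          * (n.choose m * (n.choose m : ℝ)⁻¹) := by rw [mul_inv]; ring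
    _ ≤ 2 ^ (k + 1) * (((n : ℝ) ^ m / m.factorial) ^ k * (m.factorial : ℝ)⁻¹) * 1 := by
        gcongr
        · exact Nat.choose_le_pow_div m n
        · exact mul_inv_le_one
    _ = 2 ^ (k + 1) * (((n : ℝ) ^ k) ^ m / (m.factorial : ℝ) ^ (k + 1)) := by
        rw [div_pow, ← pow_mul, ← pow_mul, mul_comm m k]
        ring

end MonotoneSubsequences

section SuccRoot

/-- The `(k+1)`-st root of `n`. -/
noncomputable def succRoot (k n : ℕ) : ℝ :=
  (n : ℝ) ^ ((k + 1 : ℕ) : ℝ)⁻¹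

lemma succRoot_nonneg (k n : ℕ) : 0 ≤ succRoot k n :=
  Real.rpow_nonneg n.cast_nonneg _

lemma succRoot_pow_succ (k n : ℕ) : succRoot k n ^ (k + 1) = n :=
  Real.rpow_inv_natCast_pow n.cast_nonneg k.succ_ne_zero

lemma succRoot_pow (k n : ℕ) : succRoot k n ^ k = (n : ℝ) ^ ((k : ℝ) / (k + 1)) := by
  rw [succRoot, ← Real.rpow_natCast, ← Real.rpow_mul n.cast_nonneg, Nat.cast_succ,
    inv_mul_eq_div]

lemma tendsto_succRoot (k : ℕ) : Tendsto (succRoot k) atTop atTop :=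
  (tendsto_rpow_atTop (by positivity)).comp tendsto_natCast_atTop_atTop

end SuccRoot

section UpperBound

variable {k : ℕ}

lemma pow_div_factorial_le_of_mul_le {c y : ℝ} {m : ℕ} (hc : 0 < c) (hy : 0 ≤ y)
    (hm : c * y ≤ m) : y ^ m / m.factorial ≤ (Real.exp 1 / c) ^ m := by
  calc y ^ m / m.factorial ≤ (m / c) ^ m / m.factorial := by
        gcongr
        rwa [le_div_iff₀' hc]
    _ = (m : ℝ) ^ m / m.factorial / c ^ m := by ring
    _ ≤ Real.exp m / c ^ m := by
        gcongr
        exact Real.pow_div_factorial_le_exp _ m.cast_nonneg m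
    _ = (Real.exp 1 / c) ^ m := by rw [div_pow, ← Real.exp_nat_mul, mul_one]

lemma expect_monoSubCount_le_of_mul_le {n m : ℕ} (hn : n ≠ 0) {c : ℝ} (hc : Real.exp 1 < c)
    (hm : c * succRoot k n ^ k ≤ m) :
    𝔼 A ∈ HDPerms n k, monoSubCount m A ≤ 2 ^ (k + 1) * (Real.exp 1 / c) ^ m := by
  have hc₀ : 0 < c := (Real.exp_pos 1).trans hc
  have hratio : (Real.exp 1 / c) ^ m ≤ 1 :=
    pow_le_one₀ (by positivity) ((div_le_one hc₀).2 hc.le)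
  have hroot : ((n : ℝ) ^ k) ^ m = ((succRoot k n ^ k) ^ m) ^ (k + 1) := by
    rw [← succRoot_pow_succ k n, ← pow_mul, ← pow_mul, ← pow_mul, ← pow_mul]
    ring_nf
  refine (expect_monoSubCount_le hn m).trans ?_
  gcongr
  calc ((n : ℝ) ^ k) ^ m / (m.factorial : ℝ) ^ (k + 1)
      = ((succRoot k n ^ k) ^ m / m.factorial) ^ (k + 1) := by rw [hroot, div_pow]
    _ ≤ ((Real.exp 1 / c) ^ m) ^ (k + 1) := by
        have := succRoot_nonneg k n
        gcongr
        exact pow_div_factorial_le_of_mul_le hc₀ (by positivity) hm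
    _ ≤ (Real.exp 1 / c) ^ m := pow_le_of_le_one (by positivity) hratio k.succ_ne_zero

theorem aas_HLen_le (hk : 1 ≤ k) {c : ℝ} (hc : Real.exp 1 < c) :
    Aas (HDPerms · k) fun n A => (HLen n k A : ℝ) ≤ c * (n : ℝ) ^ ((k : ℝ) / (k + 1)) := by
  have hc₀ : 0 < c := (Real.exp_pos 1).trans hc
  let m (n : ℕ) : ℕ := ⌊c * succRoot k n ^ k⌋₊ + 1
  have hm : Tendsto m atTop atTop :=
    (tendsto_add_atTop_nat 1).comp (tendsto_nat_floor_atTop.comp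
      (((tendsto_pow_atTop (by omega)).comp (tendsto_succRoot k)).const_mul_atTop hc₀))
  have hlim : Tendsto (fun n => 2 ^ (k + 1) * (Real.exp 1 / c) ^ m n) atTop (𝓝 0) := by
    simpa using ((tendsto_pow_atTop_nhds_zero_of_lt_one (by positivity)
      ((div_lt_one hc₀).2 hc)).comp hm).const_mul (2 ^ (k + 1))
  have hne : ∀ᶠ n in atTop, n ≠ 0 := eventually_ne_atTop 0
  refine aas_of_expect_le (hne.mono fun n => HDPerms_nonempty) (F := fun n => monoSubCount (m n))
    (fun n A _ => sum_nonneg fun _ _ => onesInd_nonneg)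
    (hne.mono fun n hn => expect_monoSubCount_le_of_mul_le hn hc ?_) hlim fun n A _ hA => ?_
  · simpa [m] using (Nat.lt_floor_add_one (c * succRoot k n ^ k)).le
  · rw [← succRoot_pow, not_le] at hA
    have hroot := succRoot_nonneg k n
    exact one_le_monoSubCount ((Nat.floor_lt (by positivity)).2 hA)

end UpperBound

section Moments

variable {n k : ℕ} {D D' S : Finset (Fin (k + 1) → Fin n)} {A : (Fin (k + 1) → Fin n) → Bool}

/-- The number of support positions of `A` in `D`. -/
def pointCount (D : Finset (Fin (k + 1) → Fin n)) (A : (Fin (k + 1) → Fin n) → Bool) : ℕ :=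
  #{x ∈ D | A x = true}

lemma pointCount_eq_sum : (pointCount D A : ℝ) = ∑ z ∈ D, onesInd {z} A := by
  simp [pointCount, onesInd]

lemma expect_onesInd_mul_pointCount_mul (S D : Finset (Fin (k + 1) → Fin n))
    (f : ((Fin (k + 1) → Fin n) → Bool) → ℝ) :
    𝔼 A ∈ HDPerms n k, onesInd S A * (pointCount D A * f A)
      = ∑ z ∈ D, 𝔼 A ∈ HDPerms n k, onesInd (insert z S) A * f A := by
  rw [← expect_sum_comm]
  refine expect_congr rfl fun A _ => ?_
  simp only [onesInd_insert, pointCount_eq_sum, sum_mul, mul_sum]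
  exact sum_congr rfl fun z _ => by ring

lemma expect_onesInd_mul_pointCount (S D : Finset (Fin (k + 1) → Fin n)) :
    𝔼 A ∈ HDPerms n k, onesInd S A * pointCount D A = ∑ z ∈ D, onesProb (insert z S) := by
  simpa [onesProb] using expect_onesInd_mul_pointCount_mul S D fun _ => 1

lemma onesProb_insert_le (z : Fin (k + 1) → Fin n) : onesProb (insert z S) ≤ onesProb S := by
  refine expect_le_expect fun A _ => ?_
  rw [onesInd_insert]
  refine mul_le_of_le_one_left onesInd_nonneg ?_
  unfold onesInd
  split_ifs <;> norm_num

/-- No layer `{x | x a = c}` of `[n]^{k+1}` meets both sets. -/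
def LayerDisjoint (D D' : Finset (Fin (k + 1) → Fin n)) : Prop :=
  ∀ x ∈ D, ∀ y ∈ D', ∀ a, x a ≠ y a

lemma card_filter_forall_mem_image_le (hS : LayerDisjoint (S \ D) D) :
    #{z ∈ D | ∀ a, z a ∈ S.image (· a)} ≤ #(S ∩ D) ^ (k + 1) := by
  have hsub : {z ∈ D | ∀ a, z a ∈ S.image (· a)}
      ⊆ Fintype.piFinset fun a => (S ∩ D).image (· a) := by
    intro z hz
    obtain ⟨hzD, hz⟩ := mem_filter.1 hz
    refine Fintype.mem_piFinset.2 fun a => ?_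
    obtain ⟨x, hxS, hxz⟩ := mem_image.1 (hz a)
    by_cases hxD : x ∈ D
    · exact mem_image.2 ⟨x, mem_inter.2 ⟨hxS, hxD⟩, hxz⟩
    · exact absurd hxz (hS x (mem_sdiff.2 ⟨hxS, hxD⟩) z hzD a)
  calc _ ≤ ∏ a, #((S ∩ D).image fun x => x a) := by
        rw [← Fintype.card_piFinset]; exact card_le_card hsub
    _ ≤ ∏ _a : Fin (k + 1), #(S ∩ D) := prod_le_prod' fun a _ => card_image_le
    _ = #(S ∩ D) ^ (k + 1) := by simp

lemma sum_onesProb_insert_le {r u : ℕ} (hr : #S ≤ r) (hrn : r < n) (hS : LayerDisjoint (S \ D) D)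
    (hu : #(S ∩ D) ≤ u) :
    ∑ z ∈ D, onesProb (insert z S) ≤ (u ^ (k + 1) + #D / (n - r)) * onesProb S := by
  have hpos : (0 : ℝ) < n - r := sub_pos.2 (mod_cast hrn)
  have hstale : (#{z ∈ D | ∀ a, z a ∈ S.image (· a)} : ℝ) ≤ u ^ (k + 1) :=
    mod_cast (card_filter_forall_mem_image_le hS).trans (Nat.pow_le_pow_left hu _)
  have hterm : ∀ z ∈ D, onesProb (insert z S)
      ≤ (if ∀ a, z a ∈ S.image (· a) then onesProb S else 0) + onesProb S / (n - r) := by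
    intro z _
    split_ifs with hz
    · exact le_add_of_le_of_nonneg (onesProb_insert_le z) (div_nonneg onesProb_nonneg hpos.le)
    · push Not at hz
      obtain ⟨a, ha⟩ := hz
      rw [zero_add, le_div_iff₀' hpos]
      refine le_trans ?_ (onesProb_insert_mul_le ha)
      gcongr
      exact onesProb_nonneg
  calc _ ≤ _ := sum_le_sum hterm
    _ = #{z ∈ D | ∀ a, z a ∈ S.image (· a)} * onesProb S + #D / (n - r) * onesProb S := by
        rw [sum_add_distrib, ← sum_filter, sum_const, sum_const, nsmul_eq_mul, nsmul_eq_mul]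
        ring
    _ ≤ _ := by
        rw [add_mul]
        gcongr
        exact onesProb_nonneg

lemma expect_onesInd_mul_pointCount_mul_le {r u : ℕ} (hr : #S ≤ r) (hrn : r < n)
    (hS : LayerDisjoint (S \ D) D) (hu : #(S ∩ D) ≤ u) {f : ((Fin (k + 1) → Fin n) → Bool) → ℝ}
    {K : ℝ} (hK : 0 ≤ K)
    (hf : ∀ z ∈ D, 𝔼 A ∈ HDPerms n k, onesInd (insert z S) A * f A ≤ K * onesProb (insert z S)) :
    𝔼 A ∈ HDPerms n k, onesInd S A * (pointCount D A * f A)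
      ≤ K * (u ^ (k + 1) + #D / (n - r)) * onesProb S := by
  rw [expect_onesInd_mul_pointCount_mul, mul_assoc]
  refine (sum_le_sum hf).trans ?_
  rw [← mul_sum]
  gcongr
  exact sum_onesProb_insert_le hr hrn hS hu

lemma expect_onesInd_mul_pointCount_pow_le {m r : ℕ} (hS : S ⊆ D) (hr : #S + m ≤ r) (hrn : r < n) :
    𝔼 A ∈ HDPerms n k, onesInd S A * (pointCount D A : ℝ) ^ m
      ≤ (r ^ (k + 1) + #D / (n - r)) ^ m * onesProb S := by
  have hpos : (0 : ℝ) < n - r := sub_pos.2 (mod_cast hrn)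
  induction m generalizing S with
  | zero => simp [onesProb]
  | succ m ih =>
    simp only [pow_succ' (pointCount D _ : ℝ), pow_succ (_ + _ / _ : ℝ)]
    refine expect_onesInd_mul_pointCount_mul_le (by omega) hrn ?_
      ((card_le_card inter_subset_left).trans (by omega : #S ≤ r)) (by positivity) fun z hz => ?_
    · simp [LayerDisjoint, sdiff_eq_empty_iff_subset.2 hS]
    · exact ih (insert_subset hz hS) (by have := card_insert_le z S; omega)

lemma expect_pointCount_pow_le {m : ℕ} (hm : m < n) (D : Finset (Fin (k + 1) → Fin n)) :
    𝔼 A ∈ HDPerms n k, (pointCount D A : ℝ) ^ m ≤ (m ^ (k + 1) + #D / (n - m)) ^ m := by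
  simpa [onesInd_empty, onesProb_empty (by omega : n ≠ 0)]
    using expect_onesInd_mul_pointCount_pow_le (empty_subset D) (by simp) hm

lemma expect_pointCount_mul_pointCount_le (hn : 1 < n) (hD : LayerDisjoint D D') :
    𝔼 A ∈ HDPerms n k, (pointCount D A : ℝ) * pointCount D' A
      ≤ #D' / (n - 1) * (#D / (n - 1)) := by
  have hpos : (0 : ℝ) < n - 1 := sub_pos.2 (mod_cast hn)
  have hfirst : ∀ x ∈ D, 𝔼 A ∈ HDPerms n k, onesInd {x} A * pointCount D' A
      ≤ #D' / (n - 1) * onesProb {x} := by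
    intro x hx
    have hxD' : x ∉ D' := fun h => hD x hx x h 0 rfl
    have hsep : LayerDisjoint ({x} \ D') D' := by simpa [LayerDisjoint, hxD'] using hD x hx
    simpa [onesProb, hxD'] using expect_onesInd_mul_pointCount_mul_le (S := {x}) (f := fun _ => 1)
      (r := 1) (u := 0) (by simp) hn hsep (by simp [hxD']) zero_le_one (by simp [onesProb])
  simpa [onesInd_empty, onesProb_empty (by omega : n ≠ 0)]
    using expect_onesInd_mul_pointCount_mul_le (S := ∅) (r := 1) (u := 0) (by simp) hn
      (by simp [LayerDisjoint]) (by simp) (by positivity) hfirst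

lemma expect_onesInd_mul_pointCount_sq_mul_le {r : ℕ} (hr : #S + 1 ≤ r) (hrn : r < n)
    (hS : LayerDisjoint S D) {f : ((Fin (k + 1) → Fin n) → Bool) → ℝ} {K : ℝ} (hK : 0 ≤ K)
    (hf : ∀ x ∈ D, ∀ x' ∈ D, 𝔼 A ∈ HDPerms n k, onesInd (insert x' (insert x S)) A * f A
      ≤ K * onesProb (insert x' (insert x S))) :
    𝔼 A ∈ HDPerms n k, onesInd S A * ((pointCount D A : ℝ) ^ 2 * f A)
      ≤ K * (1 + #D / (n - r)) * (#D / (n - r)) * onesProb S := by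
  have hpos : (0 : ℝ) < n - r := sub_pos.2 (mod_cast hrn)
  have hSD : S ∩ D = ∅ := by
    ext x
    simpa using fun hxS hxD => hS x hxS x hxD 0 rfl
  have hfirst : ∀ x ∈ D, 𝔼 A ∈ HDPerms n k, onesInd (insert x S) A * (pointCount D A * f A)
      ≤ K * (1 + #D / (n - r)) * onesProb (insert x S) := by
    intro x hx
    have hsep : LayerDisjoint (insert x S \ D) D := by
      rw [insert_sdiff_of_mem _ hx]
      exact fun y hy => hS y (mem_sdiff.1 hy).1
    simpa using expect_onesInd_mul_pointCount_mul_le (u := 1) ((card_insert_le x S).trans hr) hrn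
      hsep (by simp [insert_inter_of_mem hx, hSD]) hK (hf x hx)
  simpa [sq, mul_assoc] using expect_onesInd_mul_pointCount_mul_le (u := 0) (by omega) hrn
    (fun y hy => hS y (mem_sdiff.1 hy).1) (by simp [hSD]) (by positivity) hfirst

lemma expect_pointCount_sq_mul_pointCount_sq_le (hn : 3 < n) (hD : LayerDisjoint D D') :
    𝔼 A ∈ HDPerms n k, (pointCount D A : ℝ) ^ 2 * (pointCount D' A : ℝ) ^ 2
      ≤ (1 + #D' / (n - 3)) * (#D' / (n - 3)) * (1 + #D / (n - 3)) * (#D / (n - 3)) := by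
  have hpos : (0 : ℝ) < n - 3 := sub_pos.2 (mod_cast hn)
  have hfirst : ∀ x ∈ D, ∀ x' ∈ D, 𝔼 A ∈ HDPerms n k,
      onesInd (insert x' (insert x ∅)) A * (pointCount D' A : ℝ) ^ 2
      ≤ (1 + #D' / (n - 3)) * (#D' / (n - 3)) * onesProb (insert x' (insert x ∅)) := by
    intro x hx x' hx'
    have hsep : LayerDisjoint (insert x' (insert x ∅)) D' := by
      simpa [LayerDisjoint] using ⟨hD x' hx', hD x hx⟩
    simpa [onesProb] using expect_onesInd_mul_pointCount_sq_mul_le (r := 3) (f := fun _ => 1)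
      (Nat.succ_le_succ (card_le_two (a := x') (b := x))) hn hsep zero_le_one
      (by simp [onesProb])
  simpa [onesInd_empty, onesProb_empty (by omega : n ≠ 0)]
    using expect_onesInd_mul_pointCount_sq_mul_le (S := ∅) (r := 3) (by simp) hn
      (by simp [LayerDisjoint]) (by positivity) hfirst

lemma onesProb_singleton (hn : n ≠ 0) (x : Fin (k + 1) → Fin n) : onesProb {x} = (n : ℝ)⁻¹ := by
  have h := onesProb_insert_eq (S := ∅) (z := x) (a := 0) (by simp)
  simp only [image_empty, card_empty, Nat.cast_zero, sub_zero, sum_empty, add_zero,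
    insert_empty_eq, onesProb_empty hn] at h
  exact eq_inv_of_mul_eq_one_right h

lemma expect_pointCount (hn : n ≠ 0) (D : Finset (Fin (k + 1) → Fin n)) :
    𝔼 A ∈ HDPerms n k, (pointCount D A : ℝ) = #D / n := by
  simpa [onesInd_empty, onesProb_singleton hn, div_eq_mul_inv]
    using expect_onesInd_mul_pointCount ∅ D

lemma expect_pointCount_sq (D : Finset (Fin (k + 1) → Fin n)) :
    𝔼 A ∈ HDPerms n k, (pointCount D A : ℝ) ^ 2 = ∑ y ∈ D, ∑ x ∈ D, onesProb {x, y} := by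
  simpa [onesInd_empty, expect_onesInd_mul_pointCount, ← sq]
    using expect_onesInd_mul_pointCount_mul ∅ D fun A => pointCount D A

lemma onesProb_pair_le {x y : Fin (k + 1) → Fin n} (hn : 1 < n) (hxy : x ≠ y) :
    onesProb {x, y} ≤ ((n : ℝ) * (n - 1))⁻¹ := by
  have hpos : (0 : ℝ) < n - 1 := sub_pos.2 (mod_cast hn)
  obtain ⟨a, ha⟩ := Function.ne_iff.1 hxy
  have h := onesProb_insert_mul_le (S := {y}) (z := x) (a := a) (by simpa using ha)
  rw [card_singleton, Nat.cast_one, onesProb_singleton (by omega), ← le_div_iff₀' hpos] at h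
  rwa [mul_inv, ← div_eq_mul_inv]

lemma le_onesProb_pair (hk : 1 ≤ k) {x y : Fin (k + 1) → Fin n} (hn : 1 < n)
    (hxy : ∀ a, x a ≠ y a) :
    ((n : ℝ) - 2) / (n * (n - 1) ^ 2) ≤ onesProb {x, y} := by
  have hpos : (0 : ℝ) < n - 1 := sub_pos.2 (mod_cast hn)
  have hne : Function.update x 0 (y 0) ≠ y := by
    have hlast : Fin.last k ≠ 0 := by
      rw [ne_eq, Fin.last_eq_zero_iff]
      omega
    intro h
    exact hxy (Fin.last k) (by simpa [hlast] using congrFun h (Fin.last k))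
  have h := onesProb_insert_eq (S := {y}) (z := x) (a := 0) (by simpa using hxy 0)
  rw [image_singleton, card_singleton, Nat.cast_one, sum_singleton,
    onesProb_singleton (by omega)] at h
  have hpair := onesProb_pair_le hn hne
  have hn₀ : (n : ℝ) ≠ 0 := by positivity
  calc ((n : ℝ) - 2) / (n * (n - 1) ^ 2)
      = ((n : ℝ)⁻¹ - ((n : ℝ) * (n - 1))⁻¹) / (n - 1) := by field_simp; ring
    _ ≤ ((n : ℝ)⁻¹ - onesProb {Function.update x 0 (y 0), y}) / (n - 1) := by gcongr
    _ = onesProb {x, y} := by rw [← h]; field_simp; ring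

lemma le_expect_pointCount_piFinset_sq (hk : 1 ≤ k) (hn : 1 < n)
    (B : Fin (k + 1) → Finset (Fin n)) :
    #(Fintype.piFinset B)
        * ((n : ℝ)⁻¹ + (∏ a, (#(B a) - 1) : ℝ) * ((n - 2) / (n * (n - 1) ^ 2)))
      ≤ 𝔼 A ∈ HDPerms n k, (pointCount (Fintype.piFinset B) A : ℝ) ^ 2 := by
  have hfresh : ∀ y ∈ Fintype.piFinset B,
      (∏ a, (#(B a) - 1) : ℝ) = #(Fintype.piFinset fun a => (B a).erase (y a)) := by
    intro y hy
    rw [Fintype.card_piFinset, Nat.cast_prod]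
    refine prod_congr rfl fun a _ => ?_
    rw [cast_card_erase_of_mem (Fintype.mem_piFinset.1 hy a)]
  have hrow : ∀ y ∈ Fintype.piFinset B,
      (n : ℝ)⁻¹ + (∏ a, (#(B a) - 1) : ℝ) * ((n - 2) / (n * (n - 1) ^ 2))
        ≤ ∑ x ∈ Fintype.piFinset B, onesProb {x, y} := by
    intro y hy
    have hy' : y ∉ Fintype.piFinset fun a => (B a).erase (y a) := by simp [Fintype.mem_piFinset]
    have hsub : insert y (Fintype.piFinset fun a => (B a).erase (y a)) ⊆ Fintype.piFinset B :=
      insert_subset hy (Fintype.piFinset_subset _ _ fun a => erase_subset _ _)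
    refine le_trans ?_ (sum_le_sum_of_subset_of_nonneg hsub fun _ _ _ => onesProb_nonneg)
    rw [sum_insert hy', pair_eq_singleton, onesProb_singleton (by omega), hfresh y hy,
      ← nsmul_eq_mul]
    gcongr
    refine card_nsmul_le_sum _ _ _ fun x hx => le_onesProb_pair hk hn fun a => ?_
    exact (mem_erase.1 (Fintype.mem_piFinset.1 hx a)).1
  rw [expect_pointCount_sq, ← nsmul_eq_mul]
  exact card_nsmul_le_sum _ _ _ hrow

end Moments

section DiagonalBoxes

variable {n k s i j : ℕ}

/-- The `i`-th block of length `s` in `[n]`, cut off at `n`. -/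
def block (n s i : ℕ) : Finset (Fin n) :=
  {v | (v : ℕ) ∈ Ico (i * s) ((i + 1) * s)}

lemma card_block (h : (i + 1) * s ≤ n) : #(block n s i) = s := by
  have hval : (block n s i).map Fin.valEmbedding = Ico (i * s) ((i + 1) * s) := by
    ext v
    simp only [block, Finset.mem_map, mem_filter, mem_univ, true_and, Fin.valEmbedding_apply]
    exact ⟨by rintro ⟨w, hw, rfl⟩; exact hw,
      fun hv => ⟨⟨v, (mem_Ico.1 hv).2.trans_le h⟩, hv, rfl⟩⟩
  rw [← card_map Fin.valEmbedding, hval, Nat.card_Ico, ← Nat.sub_mul, Nat.add_sub_cancel_left,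
    one_mul]

lemma lt_of_mem_block {v w : Fin n} (hij : i < j) (hv : v ∈ block n s i) (hw : w ∈ block n s j) :
    v < w := by
  simp only [block, mem_filter, mem_univ, true_and, mem_Ico] at hv hw
  exact hv.2.trans_le ((Nat.mul_le_mul_right s hij).trans hw.1)

/-- The `i`-th cube of side `s` on the main diagonal of `[n]^{k+1}`. -/
def diagBox (n k s i : ℕ) : Finset (Fin (k + 1) → Fin n) :=
  Fintype.piFinset fun _ => block n s i

lemma card_diagBox (h : (i + 1) * s ≤ n) : #(diagBox n k s i) = s ^ (k + 1) := by
  rw [diagBox, Fintype.card_piFinset_const, card_block h]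

lemma lt_of_mem_diagBox {x y : Fin (k + 1) → Fin n} (hij : i < j) (hx : x ∈ diagBox n k s i)
    (hy : y ∈ diagBox n k s j) (a : Fin (k + 1)) : x a < y a :=
  lt_of_mem_block hij (Fintype.mem_piFinset.1 hx a) (Fintype.mem_piFinset.1 hy a)

lemma layerDisjoint_diagBox (hij : i ≠ j) : LayerDisjoint (diagBox n k s i) (diagBox n k s j) := by
  intro x hx y hy a
  rcases hij.lt_or_gt with hlt | hgt
  · exact (lt_of_mem_diagBox hlt hx hy a).ne
  · exact (lt_of_mem_diagBox hgt hy hx a).ne'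

lemma card_occupied_diagBox_le_HLen (I : Finset ℕ) (s : ℕ) (A : (Fin (k + 1) → Fin n) → Bool) :
    #{i ∈ I | pointCount (diagBox n k s i) A ≠ 0} ≤ HLen n k A := by
  set J := {i ∈ I | pointCount (diagBox n k s i) A ≠ 0}
  have hocc (r : Fin #J) : ∃ x ∈ diagBox n k s (J.orderEmbOfFin rfl r), A x = true := by
    have hr := (mem_filter.1 (J.orderEmbOfFin_mem rfl r)).2
    obtain ⟨x, hx⟩ := card_pos.1 (Nat.pos_of_ne_zero hr)
    exact ⟨x, mem_filter.1 hx⟩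
  choose α hαbox hαA using hocc
  refine IsMonoSub.le_HLen (α := α) ⟨hαA, fun a => .inl fun r r' hr => ?_⟩
  exact lt_of_mem_diagBox ((J.orderEmbOfFin rfl).strictMono hr) (hαbox r) (hαbox r') a

/-- A box with `X` points is counted with weight `X - X.choose 2`, which is at most `1`. -/
lemma sum_pointCount_sub_le_HLen (I : Finset ℕ) (s : ℕ) (A : (Fin (k + 1) → Fin n) → Bool) :
    (3 * ∑ i ∈ I, (pointCount (diagBox n k s i) A : ℝ)
      - ∑ i ∈ I, (pointCount (diagBox n k s i) A : ℝ) ^ 2) / 2 ≤ HLen n k A := by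
  have hweight (X : ℕ) : 3 * (X : ℝ) - (X : ℝ) ^ 2 ≤ 2 * if X ≠ 0 then 1 else 0 := by
    rcases X with _ | _ | X
    · simp
    · norm_num
    · push_cast
      simp only [ne_eq, Nat.add_eq_zero_iff, one_ne_zero, and_false, not_false_eq_true, if_true]
      nlinarith [X.cast_nonneg (α := ℝ)]
  have hocc : (#{i ∈ I | pointCount (diagBox n k s i) A ≠ 0} : ℝ) ≤ HLen n k A :=
    mod_cast card_occupied_diagBox_le_HLen I s A
  rw [div_le_iff₀' two_pos, mul_sum, ← sum_sub_distrib]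
  calc _ ≤ ∑ i ∈ I, 2 * (if pointCount (diagBox n k s i) A ≠ 0 then 1 else 0 : ℝ) :=
        sum_le_sum fun i _ => hweight _
    _ = 2 * #{i ∈ I | pointCount (diagBox n k s i) A ≠ 0} := by rw [← mul_sum, sum_boole]
    _ ≤ _ := by gcongr

end DiagonalBoxes

section LowerBound

variable {k : ℕ}

/-- The side `⌊n^{1/(k+1)}⌋` of the diagonal boxes: a box then contains about one support
position on average. -/
noncomputable def boxSide (k n : ℕ) : ℕ :=
  ⌊succRoot k n⌋₊

/-- The number of diagonal boxes that fit into `[n]^{k+1}`. -/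
noncomputable def boxNum (k n : ℕ) : ℕ :=
  n / boxSide k n

lemma succ_mul_boxSide_le {n i : ℕ} (hi : i < boxNum k n) : (i + 1) * boxSide k n ≤ n :=
  (Nat.mul_le_mul_right _ hi).trans (Nat.div_mul_le_self _ _)

lemma succRoot_pow_sub_one_le_boxNum {n : ℕ} (hn : 1 ≤ succRoot k n) :
    succRoot k n ^ k - 1 ≤ boxNum k n := by
  have hside : (0 : ℝ) < boxSide k n := mod_cast Nat.floor_pos.2 hn
  have hfloor : (n : ℝ) / boxSide k n < boxNum k n + 1 := by
    rw [boxNum, ← Nat.floor_div_eq_div (K := ℝ)]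
    exact Nat.lt_floor_add_one _
  have hroot : succRoot k n ^ k ≤ n / boxSide k n := by
    rw [le_div_iff₀ hside]
    calc succRoot k n ^ k * boxSide k n ≤ succRoot k n ^ k * succRoot k n := by
          gcongr
          exact Nat.floor_le (succRoot_nonneg k n)
      _ = n := by rw [← pow_succ, succRoot_pow_succ]
  linarith

lemma tendsto_boxNum (hk : 1 ≤ k) : Tendsto (boxNum k) atTop atTop := by
  have hpow : Tendsto (fun n => succRoot k n ^ k - 1) atTop atTop :=
    tendsto_atTop_add_const_right _ _ ((tendsto_pow_atTop (by omega)).comp (tendsto_succRoot k))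
  refine tendsto_natCast_atTop_iff.1 (tendsto_atTop_mono' _ ?_ hpow)
  filter_upwards [(tendsto_succRoot k).eventually_ge_atTop 1] with n hn
  exact succRoot_pow_sub_one_le_boxNum hn

lemma tendsto_boxSide_sub_pow_div (k : ℕ) (c r : ℝ) :
    Tendsto (fun n : ℕ => (boxSide k n - c) ^ (k + 1) / (n - r)) atTop (𝓝 1) := by
  have hratio : Tendsto (fun n => (boxSide k n - c) / succRoot k n) atTop (𝓝 1) := by
    simpa [sub_div, boxSide] using (tendsto_nat_floor_div_atTop.comp (tendsto_succRoot k)).sub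
      ((tendsto_succRoot k).const_div_atTop c)
  have hprod := (hratio.pow (k + 1)).mul (tendsto_natCast_div_add_atTop (-r))
  rw [one_pow, one_mul] at hprod
  refine hprod.congr' ?_
  filter_upwards [eventually_ne_atTop 0] with n hn
  rw [div_pow, succRoot_pow_succ, ← sub_eq_add_neg, div_mul_div_cancel₀ (by positivity)]

lemma tendsto_boxSide_pow_div (k : ℕ) (r : ℝ) :
    Tendsto (fun n : ℕ => (boxSide k n : ℝ) ^ (k + 1) / (n - r)) atTop (𝓝 1) := by
  simpa using tendsto_boxSide_sub_pow_div k 0 r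

lemma eventually_expect_pointCount_diagBox_pow_le (k m : ℕ) :
    ∀ᶠ n in atTop, ∀ i < boxNum k n,
      𝔼 A ∈ HDPerms n k, (pointCount (diagBox n k (boxSide k n) i) A : ℝ) ^ m
        ≤ (m ^ (k + 1) + 2) ^ m := by
  filter_upwards [eventually_gt_atTop m,
    (tendsto_boxSide_pow_div k m).eventually_le_const one_lt_two] with n hn hratio i hi
  have hpos : (0 : ℝ) < n - m := sub_pos.2 (mod_cast hn)
  refine (expect_pointCount_pow_le hn _).trans ?_
  rw [card_diagBox (succ_mul_boxSide_le hi), Nat.cast_pow]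
  gcongr

lemma aas_abs_avg_pointCount_sub_one_lt (hk : 1 ≤ k) {δ : ℝ} (hδ : 0 < δ) :
    Aas (HDPerms · k) fun n A =>
      |(∑ i ∈ range (boxNum k n), (pointCount (diagBox n k (boxSide k n) i) A : ℝ)) / boxNum k n
        - 1| < δ := by
  have hcross := (tendsto_boxSide_pow_div k 1).mul (tendsto_boxSide_pow_div k 1)
  rw [← sq] at hcross
  refine aas_abs_avg_sub_lt (C := (2 ^ (k + 1) + 2) ^ 2)
    ((eventually_ne_atTop 0).mono fun n => HDPerms_nonempty) (tendsto_boxNum hk) zero_le_one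
    (tendsto_boxSide_pow_div k 0) hcross ?_ ?_ ?_ hδ
  · filter_upwards [eventually_ne_atTop 0] with n hn i hi
    rw [expect_pointCount hn, card_diagBox (succ_mul_boxSide_le hi), sub_zero, Nat.cast_pow]
  · filter_upwards [eventually_gt_atTop 1] with n hn i hi j hj hij
    simpa only [card_diagBox (succ_mul_boxSide_le hi), card_diagBox (succ_mul_boxSide_le hj),
      Nat.cast_pow] using expect_pointCount_mul_pointCount_le hn
        (layerDisjoint_diagBox (k := k) (s := boxSide k n) hij)
  · exact mod_cast eventually_expect_pointCount_diagBox_pow_le k 2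

lemma tendsto_secondMoment_lowerBound (k : ℕ) :
    Tendsto (fun n : ℕ => (boxSide k n : ℝ) ^ (k + 1)
      * ((n : ℝ)⁻¹ + (boxSide k n - 1 : ℝ) ^ (k + 1) * ((n - 2) / (n * (n - 1) ^ 2))))
      atTop (𝓝 2) := by
  have hsmall : Tendsto (fun n : ℕ => 1 / ((n : ℝ) - 1)) atTop (𝓝 0) :=
    (tendsto_atTop_add_const_right _ _ tendsto_natCast_atTop_atTop).const_div_atTop 1
  have hlim := (tendsto_boxSide_sub_pow_div k 0 0).mul
    (((tendsto_boxSide_sub_pow_div k 1 1).mul (hsmall.const_sub 1)).const_add 1)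
  norm_num only at hlim
  refine hlim.congr' ?_
  filter_upwards [eventually_gt_atTop 1] with n hn
  have hpos : (0 : ℝ) < n - 1 := sub_pos.2 (mod_cast hn)
  have hn₀ : (n : ℝ) ≠ 0 := by positivity
  simp only [sub_zero]
  field_simp
  ring

lemma aas_abs_avg_pointCount_sq_sub_two_lt (hk : 1 ≤ k) {δ : ℝ} (hδ : 0 < δ) :
    Aas (HDPerms · k) fun n A =>
      |(∑ i ∈ range (boxNum k n), (pointCount (diagBox n k (boxSide k n) i) A : ℝ) ^ 2)
        / boxNum k n - 2| < δ := by
  have hratio := tendsto_boxSide_pow_div k 3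
  have hcross := (((hratio.const_add 1).mul hratio).mul (hratio.const_add 1)).mul hratio
  rw [show ((1 + 1) * 1 * (1 + 1) * 1 : ℝ) = 2 ^ 2 by norm_num] at hcross
  refine aas_abs_avg_sub_lt (C := (4 ^ (k + 1) + 2) ^ 4)
    ((eventually_ne_atTop 0).mono fun n => HDPerms_nonempty) (tendsto_boxNum hk) zero_le_two
    (tendsto_secondMoment_lowerBound k) hcross ?_ ?_ ?_ hδ
  · filter_upwards [eventually_gt_atTop 1] with n hn i hi
    simpa [diagBox, card_block (succ_mul_boxSide_le hi)]
      using le_expect_pointCount_piFinset_sq hk hn fun _ => block n (boxSide k n) i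
  · filter_upwards [eventually_gt_atTop 3] with n hn i hi j hj hij
    simpa only [card_diagBox (succ_mul_boxSide_le hi), card_diagBox (succ_mul_boxSide_le hj),
      Nat.cast_pow] using expect_pointCount_sq_mul_pointCount_sq_le hn
        (layerDisjoint_diagBox (k := k) (s := boxSide k n) hij)
  · simpa only [← pow_mul] using mod_cast eventually_expect_pointCount_diagBox_pow_le k 4

theorem aas_le_HLen (hk : 1 ≤ k) {c : ℝ} (hc : c < 1 / 2) :
    Aas (HDPerms · k) fun n A => c * (n : ℝ) ^ ((k : ℝ) / (k + 1)) ≤ (HLen n k A : ℝ) := by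
  obtain ⟨c', hmax, hc'⟩ := exists_between (max_lt hc one_half_pos)
  obtain ⟨hcc', hc'₀⟩ := max_lt_iff.1 hmax
  have hδ : 0 < (1 / 2 - c') / 2 := by linarith
  have hpow : Tendsto (fun n => succRoot k n ^ k) atTop atTop :=
    (tendsto_pow_atTop (by omega)).comp (tendsto_succRoot k)
  have hlarge := hpow.eventually_ge_atTop (c' / (c' - c))
  refine ((aas_abs_avg_pointCount_sub_one_lt hk hδ).and
    (aas_abs_avg_pointCount_sq_sub_two_lt hk hδ)).mono ?_
  filter_upwards [hlarge, (tendsto_succRoot k).eventually_ge_atTop 1,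
    (tendsto_boxNum hk).eventually_gt_atTop 0] with n hn hroot hM A _ ⟨hfirst, hsecond⟩
  have hM' : (0 : ℝ) < boxNum k n := mod_cast hM
  rw [abs_lt, lt_sub_iff_add_lt, lt_div_iff₀ hM'] at hfirst
  rw [abs_lt, sub_lt_iff_lt_add, div_lt_iff₀ hM'] at hsecond
  rw [div_le_iff₀ (by linarith)] at hn
  calc c * (n : ℝ) ^ ((k : ℝ) / (k + 1)) ≤ c' * (succRoot k n ^ k - 1) := by
        rw [← succRoot_pow]; linarith
    _ ≤ c' * boxNum k n := by
        gcongr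
        exact succRoot_pow_sub_one_le_boxNum hroot
    _ ≤ (3 * ∑ i ∈ range (boxNum k n), (pointCount (diagBox n k (boxSide k n) i) A : ℝ)
          - ∑ i ∈ range (boxNum k n), (pointCount (diagBox n k (boxSide k n) i) A : ℝ) ^ 2)
          / 2 := by linarith
    _ ≤ HLen n k A := sum_pointCount_sub_le_HLen (range (boxNum k n)) (boxSide k n) A

end LowerBound

/-- Asymptotically almost surely, a uniformly random `A ∈ L_n^k` satisfies
`H(A) n^{-k/(k+1)} ∈ [1/(k+2), e + ε]`. -/
theorem random_monotone_aas (k : ℕ) (hk : 1 ≤ k) (eps : ℝ) (heps : 0 < eps) :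
    Filter.Tendsto (fun n : ℕ =>
      (((HDPerms n k).filter (fun A =>
          ((k : ℝ) + 2)⁻¹ * (n : ℝ) ^ ((k : ℝ) / ((k : ℝ) + 1)) ≤ (HLen n k A : ℝ) ∧
          (HLen n k A : ℝ) ≤ (Real.exp 1 + eps) * (n : ℝ) ^ ((k : ℝ) / ((k : ℝ) + 1)))).card : ℝ)
        / ((HDPerms n k).card : ℝ))
      Filter.atTop (nhds 1) := by
  have hlower : ((k : ℝ) + 2)⁻¹ < 1 / 2 := by
    rw [one_div]
    gcongr
    have : (1 : ℝ) ≤ k := mod_cast hk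
    linarith
  have haas := (aas_le_HLen hk hlower).and (aas_HLen_le hk (lt_add_of_pos_right _ heps))
  unfold Aas at haas
  convert haas
end
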